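/- Under Assumption 1, for every l ≥ 1 and every x ∈ S² one has ∑_{m=−l}^{l} |Φ_{lm}(x)|² ≤ d₀^{−2} l^{2ν} (2l+1)/(4π); consequently, the kernel u(x,y) = ∑_{l=1}^{L} ∑_{m=−l}^{l} Φ_{lm}(x) conj(Φ_{lm}(y)) satisfies |u(x,y)| ≤ (π^{−1} d₀^{−2}/(2ν+2)) (L+1)^{2ν+2} for all x, y ∈ S². -/

import Mathlib

/-!
Evaluating the operator-norm bound for `(f_ε^{⋆l})⁻¹` at the vector `conj(Y^l_n(x))` and using the
addition-type bound on the spherical harmonics gives the estimate on `∑ |Φ_{lm}(x)|²`.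

For the kernel, Cauchy–Schwarz in `m` bounds the degree-`l` block of `u(x, y)` by the same quantity
(`norm_block_le`). Since `2l + 1 ≤ 4l`, the resulting sum over `l` is at most `1/(π d₀²)` times
`∑_{l ≤ L} l^{2ν+1}`, and telescoping Bernoulli's inequality (a discrete integral comparison) bounds
this power sum by `(L+1)^{2ν+2}/(2ν+2)` (`sum_rpow_le`).
-/

noncomputable section

open MeasureTheory Filter Finset Real

namespace SphericalTest

/-- The index set `{-l, …, l}` of spherical harmonic orders at degree `l`. -/
def Idx (l : ℕ) : Finset ℤ := Finset.Icc (-(l : ℤ)) (l : ℤ)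

/-- `OpNormLE l A c` : the operator norm of the matrix `A` acting on the span of
`{Y^l_m : m ∈ Idx l}` (identified with vectors indexed by `Idx l`) is at most `c`. -/
def OpNormLE (l : ℕ) (A : ℤ → ℤ → ℂ) (c : ℝ) : Prop :=
  ∀ h : ℤ → ℂ,
    ∑ m ∈ Idx l, ‖∑ n ∈ Idx l, A m n * h n‖ ^ 2 ≤ c ^ 2 * ∑ n ∈ Idx l, ‖h n‖ ^ 2

/-- `Ainv l` is the (two-sided) inverse of the matrix `A l` on the index block `Idx l`. -/
def IsInvPair (A Ainv : ℕ → ℤ → ℤ → ℂ) : Prop :=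
  ∀ l : ℕ, ∀ m ∈ Idx l, ∀ n ∈ Idx l,
    (∑ k ∈ Idx l, A l m k * Ainv l k n) = (if m = n then 1 else 0) ∧
    (∑ k ∈ Idx l, Ainv l m k * A l k n) = (if m = n then 1 else 0)

/-- Assumption 1 (ordinary smooth noise of order ν): the rotational Fourier matrices
`A l = f_ε^{⋆l}` are invertible with inverse `Ainv l`, and for `l ≥ 1`,
`‖(f_ε^{⋆l})⁻¹‖_op ≤ d₀⁻¹ l^ν` and `‖f_ε^{⋆l}‖_op ≤ d₁ l^{-ν}`. -/
def Assumption1 (A Ainv : ℕ → ℤ → ℤ → ℂ) (d0 d1 ν : ℝ) : Prop :=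
  0 < d0 ∧ 0 < d1 ∧ 0 < ν ∧ IsInvPair A Ainv ∧
    (∀ l : ℕ, 1 ≤ l → OpNormLE l (Ainv l) (d0⁻¹ * (l : ℝ) ^ ν)) ∧
    (∀ l : ℕ, 1 ≤ l → OpNormLE l (A l) (d1 * (l : ℝ) ^ (-ν)))

/-- Assumption 2 (super smooth noise): `‖(f_ε^{⋆l})⁻¹‖_op ≤ d₀⁻¹ l^{-ν₀} exp(l^β/δ)` and
`‖f_ε^{⋆l}‖_op ≤ d₁ l^{ν₁} exp(-l^β/δ)`. -/
def Assumption2 (A Ainv : ℕ → ℤ → ℤ → ℂ) (d0 d1 ν0 ν1 δ β : ℝ) : Prop :=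
  ν1 ≤ ν0 ∧ 0 < d0 ∧ 0 < d1 ∧ 0 < δ ∧ 0 < β ∧ IsInvPair A Ainv ∧
    (∀ l : ℕ, 1 ≤ l →
      OpNormLE l (Ainv l) (d0⁻¹ * (l : ℝ) ^ (-ν0) * Real.exp ((l : ℝ) ^ β / δ))) ∧
    (∀ l : ℕ, 1 ≤ l →
      OpNormLE l (A l) (d1 * (l : ℝ) ^ ν1 * Real.exp (-((l : ℝ) ^ β) / δ)))

variable {Ω : Type*} [MeasurableSpace Ω]

/-- `Φ_{lm}(x) = ∑_{n=-l}^{l} ((f_ε^{⋆l})⁻¹)_{mn} conj(Y^l_n(x))`. -/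
def Phi (Ainv : ℕ → ℤ → ℤ → ℂ) (Y : ℕ → ℤ → Ω → ℂ) (l : ℕ) (m : ℤ) (x : Ω) : ℂ :=
  ∑ n ∈ Idx l, Ainv l m n * star (Y l n x)

/-- Ordered pairs `i₁ < i₂` of observation indices. -/
def pairs (N : ℕ) : Finset (Fin N × Fin N) := Finset.univ.filter fun p => p.1 < p.2

/-- The test statistic
`T_L = (2/(N(N-1))) ∑_{l=1}^{L} ∑_{m=-l}^{l} ∑_{i₁<i₂} Φ_{lm}(Z_{i₁}) conj(Φ_{lm}(Z_{i₂}))`. -/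
def TL (Ainv : ℕ → ℤ → ℤ → ℂ) (Y : ℕ → ℤ → Ω → ℂ) (N L : ℕ) (Z : Fin N → Ω) : ℂ :=
  (2 / ((N : ℂ) * ((N : ℂ) - 1))) *
    ∑ l ∈ Finset.Icc 1 L, ∑ m ∈ Idx l, ∑ p ∈ pairs N,
      Phi Ainv Y l m (Z p.1) * star (Phi Ainv Y l m (Z p.2))

/-- The uniform density `f₀ = (4π)⁻¹` on the sphere. -/
def f0 : Ω → ℝ := fun _ => (4 * π)⁻¹

/-- A probability density with respect to the measure `μ` (the surface measure on `S²`). -/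
def IsDensity (μ : Measure Ω) (f : Ω → ℝ) : Prop :=
  Measurable f ∧ (∀ x, 0 ≤ f x) ∧ ∫ x, f x ∂μ = 1

/-- The law of one observation whose density w.r.t. `μ` is `f`. -/
def law (μ : Measure Ω) (f : Ω → ℝ) : Measure Ω :=
  μ.withDensity fun x => ENNReal.ofReal (f x)

/-- The joint law of `N` i.i.d. observations with density `f`. -/
def lawN (μ : Measure Ω) (N : ℕ) (f : Ω → ℝ) : Measure (Fin N → Ω) :=
  Measure.pi fun _ => law μ f

/-- Spherical Fourier coefficient `f^{⋆l}_m = ∫ f(x) conj(Y^l_m(x)) dx`. -/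
def coef (μ : Measure Ω) (Y : ℕ → ℤ → Ω → ℂ) (f : Ω → ℝ) (l : ℕ) (m : ℤ) : ℂ :=
  ∫ x, (f x : ℂ) * star (Y l m x) ∂μ

/-- Membership in the Sobolev ball `W_s(S², R)`:
`f` is a density and `∑_{l,m} (1+l(l+1))^s |f^{⋆l}_m|² ≤ (4π)⁻¹ + R²`. -/
def InW (μ : Measure Ω) (Y : ℕ → ℤ → Ω → ℂ) (s R : ℝ) (f : Ω → ℝ) : Prop :=
  IsDensity μ f ∧
    ∑' l : ℕ, ∑ m ∈ Idx l,
        ENNReal.ofReal ((1 + (l : ℝ) * ((l : ℝ) + 1)) ^ s * ‖coef μ Y f l m‖ ^ 2)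
      ≤ ENNReal.ofReal ((4 * π)⁻¹ + R ^ 2)

/-- Squared L² distance to the uniform density: `‖f - f₀‖₂²`. -/
def dist2 (μ : Measure Ω) (f : Ω → ℝ) : ℝ := ∫ x, (f x - (4 * π)⁻¹) ^ 2 ∂μ

/-- The alternative `H₁(s, R, ε)`: densities `f ∈ W_s(S², R)` with `‖f - f₀‖₂² ≥ ε`. -/
def H1set (μ : Measure Ω) (Y : ℕ → ℤ → Ω → ℂ) (s R eps : ℝ) : Set (Ω → ℝ) :=
  {f | InW μ Y s R f ∧ eps ≤ dist2 μ f}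

/-- Spherical convolution `(f_ε * f)(ω) = ∫_{SO(3)} f_ε(u) f(u⁻¹ ω) du`. -/
def conv {G : Type*} [Group G] [MeasurableSpace G] [MulAction G Ω]
    (haar : Measure G) (fe : G → ℝ) (f : Ω → ℝ) (ω : Ω) : ℝ :=
  ∫ u, fe u * f (u⁻¹ • ω) ∂haar

/-- Cauchy–Schwarz for `∑ a conj(b)` when both vectors have squared norm at most `B`, in the form
given by `|a b| ≤ (|a|² + |b|²)/2`. -/
theorem norm_block_le (s : Finset ℤ) (a b : ℤ → ℂ) (B : ℝ)
    (ha : ∑ m ∈ s, ‖a m‖ ^ 2 ≤ B) (hb : ∑ m ∈ s, ‖b m‖ ^ 2 ≤ B) :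
    ‖∑ m ∈ s, a m * star (b m)‖ ≤ B := by
  have h : ‖∑ m ∈ s, a m * star (b m)‖ ≤ ∑ m ∈ s, (‖a m‖ ^ 2 + ‖b m‖ ^ 2) / 2 := by
    refine norm_sum_le_of_le s fun m _ => ?_
    rw [norm_mul, norm_star]
    nlinarith [sq_nonneg (‖a m‖ - ‖b m‖)]
  rw [← Finset.sum_div, Finset.sum_add_distrib] at h
  linarith

/-- The right-hand side is `∫ t in x..(x+1), q t^{q-1}`, so this compares the integral of an
increasing function with its value at the left endpoint; the proof uses Bernoulli's inequality for
`(1 + 1/x)^q` instead. -/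
theorem mul_rpow_le_sub (q x : ℝ) (hq : 1 ≤ q) (hx : 0 < x) :
    q * x ^ (q - 1) ≤ (x + 1) ^ q - x ^ q := by
  have hB : 1 + q * x⁻¹ ≤ (1 + x⁻¹) ^ q :=
    one_add_mul_self_le_rpow_one_add (by linarith [inv_pos.2 hx]) hq
  have hpow : (x + 1) ^ q = x ^ q * (1 + x⁻¹) ^ q := by
    rw [← Real.mul_rpow hx.le (by positivity)]
    congr 1
    field_simp
  have hsub : x ^ (q - 1) = x ^ q * x⁻¹ := by
    rw [Real.rpow_sub_one hx.ne', div_eq_mul_inv]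
  rw [hpow, hsub]
  nlinarith [mul_le_mul_of_nonneg_left hB (Real.rpow_nonneg hx.le q)]

theorem sum_rpow_le (q : ℝ) (hq : 1 ≤ q) (L : ℕ) :
    ∑ l ∈ Finset.Icc 1 L, (l : ℝ) ^ (q - 1) ≤ ((L : ℝ) + 1) ^ q / q := by
  have hq0 : 0 < q := by linarith
  induction L with
  | zero => simpa using hq0.le
  | succ k ih =>
    rw [Finset.sum_Icc_succ_top (by omega)]
    have h := mul_rpow_le_sub q ((k + 1 : ℕ) : ℝ) hq (by positivity)
    rw [le_div_iff₀ hq0] at ih ⊢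
    push_cast at h ⊢
    linarith

/-- **Pointwise bounds on Φ and on the U-statistic kernel.**
Under Assumption 1, for every `l ≥ 1` and every `x ∈ S²`,
`∑_{m=-l}^{l} |Φ_{lm}(x)|² ≤ d₀⁻² l^{2ν} (2l+1)/(4π)`; consequently the kernel
`u(x,y) = ∑_{l=1}^{L} ∑_{m} Φ_{lm}(x) conj(Φ_{lm}(y))` satisfies
`|u(x,y)| ≤ (π⁻¹ d₀⁻²/(2ν+2)) (L+1)^{2ν+2}` for all `x, y`. -/
theorem statement9
    {Ω : Type*} [MeasurableSpace Ω]
    (μ : Measure Ω) (Y : ℕ → ℤ → Ω → ℂ) (A Ainv : ℕ → ℤ → ℤ → ℂ)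
    (hYadd : ∀ (l : ℕ) (x : Ω), ∑ m ∈ Idx l, ‖Y l m x‖ ^ 2 ≤ (2 * (l : ℝ) + 1) / (4 * π))
    (d0 d1 ν : ℝ) (hA1 : Assumption1 A Ainv d0 d1 ν) :
    (∀ l : ℕ, 1 ≤ l → ∀ x : Ω,
      ∑ m ∈ Idx l, ‖Phi Ainv Y l m x‖ ^ 2
        ≤ d0⁻¹ ^ 2 * (l : ℝ) ^ (2 * ν) * (2 * (l : ℝ) + 1) / (4 * π)) ∧
    (∀ L : ℕ, ∀ x y : Ω,
      ‖∑ l ∈ Finset.Icc 1 L, ∑ m ∈ Idx l, Phi Ainv Y l m x * star (Phi Ainv Y l m y)‖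
        ≤ π⁻¹ * d0⁻¹ ^ 2 / (2 * ν + 2) * ((L : ℝ) + 1) ^ (2 * ν + 2)) := by
  obtain ⟨hd0, -, hν, -, hInv, -⟩ := hA1
  have hPhi : ∀ l : ℕ, 1 ≤ l → ∀ x : Ω,
      ∑ m ∈ Idx l, ‖Phi Ainv Y l m x‖ ^ 2
        ≤ d0⁻¹ ^ 2 * (l : ℝ) ^ (2 * ν) * (2 * (l : ℝ) + 1) / (4 * π) := by
    intro l hl x
    have h := hInv l hl fun n => star (Y l n x)
    simp only [norm_star] at h
    have hsq : (d0⁻¹ * (l : ℝ) ^ ν) ^ 2 = d0⁻¹ ^ 2 * (l : ℝ) ^ (2 * ν) := by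
      rw [mul_pow, ← Real.rpow_mul_natCast (Nat.cast_nonneg l), mul_comm ν]
      norm_num
    rw [hsq] at h
    calc _ ≤ _ := h
      _ ≤ d0⁻¹ ^ 2 * (l : ℝ) ^ (2 * ν) * ((2 * (l : ℝ) + 1) / (4 * π)) :=
          mul_le_mul_of_nonneg_left (hYadd l x) (by positivity)
      _ = _ := by ring
  refine ⟨hPhi, fun L x y => ?_⟩
  have hterm : ∀ l ∈ Finset.Icc 1 L,
      ‖∑ m ∈ Idx l, Phi Ainv Y l m x * star (Phi Ainv Y l m y)‖
        ≤ π⁻¹ * d0⁻¹ ^ 2 * (l : ℝ) ^ (2 * ν + 2 - 1) := by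
    intro l hl
    have hl1 : 1 ≤ l := (Finset.mem_Icc.1 hl).1
    have hl1' : (1 : ℝ) ≤ l := by exact_mod_cast hl1
    refine (norm_block_le _ _ _ _ (hPhi l hl1 x) (hPhi l hl1 y)).trans ?_
    have hpow : (l : ℝ) ^ (2 * ν + 2 - 1) = (l : ℝ) ^ (2 * ν) * l := by
      rw [show 2 * ν + 2 - 1 = 2 * ν + 1 by ring, Real.rpow_add_one (by positivity)]
    rw [hpow]
    calc d0⁻¹ ^ 2 * (l : ℝ) ^ (2 * ν) * (2 * (l : ℝ) + 1) / (4 * π)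
        ≤ d0⁻¹ ^ 2 * (l : ℝ) ^ (2 * ν) * (4 * (l : ℝ)) / (4 * π) := by
          gcongr
          linarith
      _ = π⁻¹ * d0⁻¹ ^ 2 * ((l : ℝ) ^ (2 * ν) * l) := by
          field_simp
  calc _ ≤ ∑ l ∈ Finset.Icc 1 L, π⁻¹ * d0⁻¹ ^ 2 * (l : ℝ) ^ (2 * ν + 2 - 1) :=
        norm_sum_le_of_le _ hterm
    _ = π⁻¹ * d0⁻¹ ^ 2 * ∑ l ∈ Finset.Icc 1 L, (l : ℝ) ^ (2 * ν + 2 - 1) :=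
        (Finset.mul_sum _ _ _).symm
    _ ≤ π⁻¹ * d0⁻¹ ^ 2 * (((L : ℝ) + 1) ^ (2 * ν + 2) / (2 * ν + 2)) :=
        mul_le_mul_of_nonneg_left (sum_rpow_le _ (by linarith) L) (by positivity)
    _ = _ := by ring

end SphericalTest
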